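/- Let n ≥ 2 and a = (a_1,…,a_n), a' = (a'_1,…,a'_n) ∈ ℂ^n with every a_j and a'_k purely imaginary, and let s ∈ ℂ with Re(s) > 0. Then I_{n,n;a,a'}(s) = ∏_{1≤j≤n} ∏_{1≤k≤n} Γ_ℝ(s+a_j+a'_k). -/

import Mathlib

open MeasureTheory Complex

noncomputable section

/-- `Γ_ℝ(s) = π^{-s/2} Γ(s/2)`. -/
def GammaR (s : ℂ) : ℂ := (Real.pi : ℂ) ^ (-s / 2) * Complex.Gamma (s / 2)

/-- Modified Bessel function of the second kind, via its integral representation. -/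
def BesselK (ν : ℂ) (y : ℝ) : ℂ :=
  (1 / 2) * ∫ t in Set.Ioi (0 : ℝ),
    Complex.exp (-((y : ℂ) / 2) * ((t : ℂ) + 1 / (t : ℂ))) * (t : ℂ) ^ ν / (t : ℂ)

/-- Extend a finite real tuple to `ℕ`, defaulting to `1`. -/
def extR {k : ℕ} (t : Fin k → ℝ) : ℕ → ℝ := fun i => if h : i < k then t ⟨i, h⟩ else 1

/-- Extend a finite real tuple to `ℕ`, defaulting to `0`. -/
def extR0 {k : ℕ} (t : Fin k → ℝ) : ℕ → ℝ := fun i => if h : i < k then t ⟨i, h⟩ else 0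

/-- The positive orthant. -/
def posSet (k : ℕ) : Set (Fin k → ℝ) := {t | ∀ j, 0 < t j}

/-- `|a| = a_1 + ⋯ + a_n` (0-based indexing). -/
def sumA (n : ℕ) (a : ℕ → ℂ) : ℂ := ∑ j ∈ Finset.range n, a j

/-- `ã_j = a_{j+1} + a_1/(n-1)` (0-based indexing). -/
def tildeA (n : ℕ) (a : ℕ → ℂ) : ℕ → ℂ := fun j => a (j + 1) + a 0 / ((n : ℂ) - 1)

/-- The normalized radial part `Ŵ^A_{n,a}` of the class one `GL_n(ℝ)` Whittaker function,
as a function of `(y_1,…,y_{n-1})` (0-based indexing). -/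
def WhittAr : ℕ → (ℕ → ℂ) → (ℕ → ℝ) → ℂ
  | 0, _, _ => 1
  | 1, _, _ => 1
  | 2, a, y => 2 * ((y 0 : ℂ) ^ ((a 0 + a 1) / 2)) *
      BesselK ((a 0 - a 1) / 2) (2 * Real.pi * y 0)
  | (n + 3), a, y =>
      ∫ t in posSet (n + 2),
        WhittAr (n + 2) (tildeA (n + 3) a)
            (fun j => y (j + 1) * Real.sqrt (extR t (j + 1) / extR t j)) *
          (∏ j ∈ Finset.range (n + 2),
            Complex.exp (((-(Real.pi * y j) ^ 2 * extR t j - 1 / extR t j : ℝ) : ℂ)) *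
              ((Real.pi * y j : ℝ) : ℂ) ^ ((((n + 2 - j : ℕ) : ℂ) * a 0) / ((n + 2 : ℕ) : ℂ)) *
              ((extR t j : ℝ) : ℂ) ^ ((((n + 3 : ℕ) : ℂ) * a 0) / (2 * ((n + 2 : ℕ) : ℂ)))) *
          ((Real.pi * extR t (n + 1) : ℝ) : ℂ) ^ (-(sumA (n + 3) a) / 2) *
          (∏ j ∈ Finset.range (n + 2), ((extR t j : ℝ) : ℂ))⁻¹

/-- `Ŵ^A_{n,a}` as a function of the full tuple `(y_1,…,y_n)`. -/
def WhittAhat (n : ℕ) (a : ℕ → ℂ) (y : ℕ → ℝ) : ℂ :=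
  ((y (n - 1) : ℝ) : ℂ) ^ sumA n a * WhittAr n a y

/-- The Mellin transform `U_{n,a}` (0-based: `s j` stands for `s_{j+1}`). -/
def Ufun (n : ℕ) (a : ℕ → ℂ) (s : ℕ → ℂ) : ℂ :=
  ∫ y in posSet (n - 1),
    WhittAr n a (extR y) *
      ∏ j ∈ Finset.range (n - 1), ((extR y j : ℝ) : ℂ) ^ s j / ((extR y j : ℝ) : ℂ)

/-- The normalized radial part `Ŵ^B_{n,b}` of the class one `SO_{2n+1}(ℝ)` Whittaker function. -/
def WhittBr : ℕ → (ℕ → ℂ) → (ℕ → ℝ) → ℂ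
  | 0, _, _ => 1
  | 1, b, y => 2 * BesselK (b 0 / 2) (2 * Real.pi * y 0)
  | (n + 2), b, y =>
      ∫ p in (posSet (n + 2) ×ˢ posSet (n + 1)),
        WhittBr (n + 1) b
            (fun j =>
              if j < n then
                y (j + 1) *
                  Real.sqrt (extR p.1 (j + 1) * extR p.2 (j + 1) /
                    (extR p.1 (j + 2) * extR p.2 j))
              else y (n + 1) * Real.sqrt (extR p.1 (n + 1) / extR p.2 n)) *
          (∏ j ∈ Finset.range (n + 2),
            Complex.exp (((-(Real.pi * y j) ^ 2 * extR p.1 j - 1 / extR p.1 j : ℝ) : ℂ)) *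
              ((Real.pi * y j : ℝ) : ℂ) ^ b (n + 1)) *
          (∏ j ∈ Finset.range (n + 1),
            Complex.exp (((-(Real.pi * y j) ^ 2 * (extR p.1 j / extR p.1 (j + 1)) * extR p.2 j -
                  1 / extR p.2 j : ℝ) : ℂ)) *
              ((extR p.1 (j + 1) * extR p.2 j : ℝ) : ℂ) ^ (b (n + 1) / 2)) *
          ((extR p.1 0 : ℝ) : ℂ) ^ b (n + 1) *
          (∏ j ∈ Finset.range (n + 1), ((extR p.2 j : ℝ) : ℂ))⁻¹ *
          (∏ j ∈ Finset.range (n + 2), ((extR p.1 j : ℝ) : ℂ))⁻¹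

/-- The Mellin transform `V_{n,b}` (0-based: `s j` stands for `s_{j+1}`). -/
def Vfun (n : ℕ) (b : ℕ → ℂ) (s : ℕ → ℂ) : ℂ :=
  ∫ y in posSet n,
    WhittBr n b (extR y) *
      ∏ j ∈ Finset.range n, ((extR y j : ℝ) : ℂ) ^ s j / ((extR y j : ℝ) : ℂ)

/-- Integral over the vertical line `Re z = c`, i.e. `i·∫_ℝ f(c+it) dt`. -/
def VInt (c : ℝ) (f : ℂ → ℂ) : ℂ := Complex.I * ∫ t : ℝ, f (c + t * Complex.I)

/-- Iterated integral over `k` vertical lines with abscissas `c 0, …, c (k-1)`;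
the integrand is fed the contour points as a 0-based sequence. -/
def VIntK (k : ℕ) (c : ℕ → ℝ) (f : (ℕ → ℂ) → ℂ) : ℂ :=
  Complex.I ^ k * ∫ t : Fin k → ℝ, f (fun i => (c i : ℂ) + (extR0 t i : ℝ) * Complex.I)



/-- The archimedean `GL_n × GL_n` zeta integral in torus coordinates. -/
def zetaGLGL (n : ℕ) (a a' : ℕ → ℂ) (s : ℂ) : ℂ :=
  (2 : ℂ) ^ n * ∫ y in posSet n,
    Complex.exp (((-(Real.pi * extR y (n - 1) ^ 2) : ℝ) : ℂ)) *
      WhittAhat n a (extR y) * WhittAhat n a' (extR y) *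
      ∏ j ∈ Finset.range n,
        ((extR y j : ℝ) : ℂ) ^ (((j + 1 : ℕ) : ℂ) * s) / ((extR y j : ℝ) : ℂ)

/-! ### One-dimensional integrals -/

theorem lintegral_fin_prod_volume_eq_prod {n : ℕ} (f : Fin n → ℝ → ENNReal)
    (hf : ∀ i, Measurable (f i)) :
    ∫⁻ x : Fin n → ℝ, ∏ i, f i (x i) = ∏ i, ∫⁻ x, f i x := by
  induction n with
  | zero => simp [volume_pi]
  | succ n ih =>
    rw [← (volume_preserving_piFinSuccAbove (fun _ : Fin (n + 1) => ℝ) 0).symm.lintegral_comp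
      (by fun_prop), Measure.volume_eq_prod, lintegral_prod _ (by fun_prop)]
    simp only [MeasurableEquiv.piFinSuccAbove_symm_apply, Fin.insertNthEquiv_apply,
      Fin.insertNth_zero', Fin.prod_univ_succ, Fin.cons_zero, Fin.cons_succ]
    rw [← ih (fun i => f i.succ) (fun i => hf _),
      lintegral_lintegral_mul (hf 0).aemeasurable
        (Finset.aemeasurable_fun_prod _ fun i _ =>
          ((hf i.succ).comp (measurable_pi_apply i)).aemeasurable)]

/-- The integrand `exp(wu - π(A e^u + B e^{-u}))`. -/
def besselKernel (A B : ℝ) (w : ℂ) (u : ℝ) : ℂ :=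
  cexp (w * u - Real.pi * (A * Real.exp u + B * Real.exp (-u)))

theorem continuous_besselKernel (A B : ℝ) (w : ℂ) : Continuous (besselKernel A B w) := by
  unfold besselKernel; fun_prop

/-- The logarithmic form of the integral of `Γ_ℝ(2w)`. -/
def gammaInt (w : ℂ) : ℂ := ∫ u : ℝ, besselKernel 1 0 w u

/-- The absolute counterpart of `gammaInt`. -/
def gammaLInt (w : ℂ) : ENNReal := ∫⁻ u : ℝ, ‖besselKernel 1 0 w u‖ₑ

theorem besselKernel_reflect {A B : ℝ} (hA : 0 < A) (hB : 0 < B) (w : ℂ) (u : ℝ) :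
    besselKernel A B (-w) (Real.log B - Real.log A - u) =
      cexp (-w * (Real.log B - Real.log A)) * besselKernel A B w u := by
  unfold besselKernel
  rw [← Complex.exp_add]
  have h1 : A * Real.exp (Real.log B - Real.log A - u) = B * Real.exp (-u) := by
    rw [show Real.log B - Real.log A - u = Real.log B - Real.log A + -u by ring, Real.exp_add,
      Real.exp_sub, Real.exp_log hA, Real.exp_log hB]; field_simp
  have h2 : B * Real.exp (-(Real.log B - Real.log A - u)) = A * Real.exp u := by
    rw [show -(Real.log B - Real.log A - u) = Real.log A - Real.log B + u by ring, Real.exp_add,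
      Real.exp_sub, Real.exp_log hA, Real.exp_log hB]; field_simp
  have h3 : ((A * Real.exp (Real.log B - Real.log A - u) +
      B * Real.exp (-(Real.log B - Real.log A - u)) : ℝ) : ℂ) =
      ((A * Real.exp u + B * Real.exp (-u) : ℝ) : ℂ) := by rw [h1, h2, add_comm]
  push_cast at h3 ⊢
  rw [h3]
  congr 1
  ring

theorem besselKernel_shift {A : ℝ} (hA : 0 < A) (w : ℂ) (u : ℝ) :
    besselKernel A 0 w (u - Real.log A) =
      cexp (-w * Real.log A) * besselKernel 1 0 w u := by
  unfold besselKernel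
  rw [← Complex.exp_add]
  have h1 : A * Real.exp (u - Real.log A) = Real.exp u := by
    rw [Real.exp_sub, Real.exp_log hA]; field_simp
  rw [← Complex.ofReal_mul, h1]
  push_cast
  congr 1
  ring

theorem integral_besselKernel_reflect {A B : ℝ} (hA : 0 < A) (hB : 0 < B) (w : ℂ) :
    ∫ u, besselKernel A B (-w) u =
      cexp (-w * (Real.log B - Real.log A)) * ∫ u, besselKernel A B w u := by
  rw [← integral_sub_left_eq_self _ volume (Real.log B - Real.log A), ← integral_const_mul]
  simp only [besselKernel_reflect hA hB]

theorem lintegral_besselKernel_reflect {A B : ℝ} (hA : 0 < A) (hB : 0 < B) (w : ℂ) :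
    ∫⁻ u, ‖besselKernel A B (-w) u‖ₑ =
      ‖cexp (-w * (Real.log B - Real.log A))‖ₑ * ∫⁻ u, ‖besselKernel A B w u‖ₑ := by
  rw [← lintegral_sub_left_eq_self _ (Real.log B - Real.log A),
    ← lintegral_const_mul' _ _ enorm_ne_top]
  simp only [besselKernel_reflect hA hB, enorm_mul]

theorem integral_besselKernel_zero {A : ℝ} (hA : 0 < A) (w : ℂ) :
    ∫ u, besselKernel A 0 w u = cexp (-w * Real.log A) * gammaInt w := by
  rw [← integral_sub_right_eq_self _ (Real.log A), gammaInt, ← integral_const_mul]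
  simp only [besselKernel_shift hA]

theorem lintegral_besselKernel_zero {A : ℝ} (hA : 0 < A) (w : ℂ) :
    ∫⁻ u, ‖besselKernel A 0 w u‖ₑ = ‖cexp (-w * Real.log A)‖ₑ * gammaLInt w := by
  rw [← lintegral_sub_right_eq_self _ (Real.log A), gammaLInt,
    ← lintegral_const_mul' _ _ enorm_ne_top]
  simp only [besselKernel_shift hA, enorm_mul]

theorem integral_Ioi_eq_integral_exp_smul {E : Type*} [NormedAddCommGroup E] [NormedSpace ℝ E]
    (f : ℝ → E) :
    ∫ t in Set.Ioi (0 : ℝ), f t = ∫ u : ℝ, Real.exp u • f (Real.exp u) := by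
  have h := integral_image_eq_integral_abs_deriv_smul (s := Set.univ) (f := Real.exp)
    (f' := Real.exp) MeasurableSet.univ (fun x _ => (Real.hasDerivAt_exp x).hasDerivWithinAt)
    Real.exp_injective.injOn f
  simpa [Set.image_univ, Real.range_exp] using h

theorem gammaInt_eq_GammaR {w : ℂ} (hw : 0 < w.re) : gammaInt (w / 2) = GammaR w := by
  have hw2 : 0 < (w / 2).re := by
    rw [Complex.div_ofNat_re]; positivity
  have h := Complex.integral_cpow_mul_exp_neg_mul_Ioi (a := w / 2) (r := Real.pi) hw2
    (by simpa using Real.pi_pos)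
  rw [integral_Ioi_eq_integral_exp_smul] at h
  rw [GammaR, gammaInt]
  have e : (1 / (Real.pi : ℂ)) ^ (w / 2) = (Real.pi : ℂ) ^ (-w / 2) := by
    rw [one_div, Complex.inv_cpow, neg_div, Complex.cpow_neg]
    rw [Complex.arg_ofReal_of_nonneg Real.pi_pos.le]
    exact Real.pi_ne_zero.symm
  rw [← e, ← h]
  congr 1
  funext u
  unfold besselKernel
  rw [real_smul, Complex.cpow_def_of_ne_zero (by simp), ← Complex.ofReal_log (Real.exp_pos u).le,
    Real.log_exp, Complex.ofReal_exp, ← Complex.exp_add, ← Complex.exp_add]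
  congr 1
  push_cast
  ring

theorem enorm_besselKernel_re (A B : ℝ) (w : ℂ) (u : ℝ) :
    ‖besselKernel A B w u‖ₑ = ‖besselKernel A B w.re u‖ₑ := by
  rw [← ofReal_norm, ← ofReal_norm]
  simp only [besselKernel, Complex.norm_exp]
  simp [-Complex.ofReal_exp]

theorem gammaLInt_lt_top {w : ℂ} (hw : 0 < w.re) : gammaLInt w < ⊤ := by
  have hG : gammaInt w.re ≠ 0 := by
    have := gammaInt_eq_GammaR (w := 2 * w.re) (by simpa using hw)
    rw [mul_div_cancel_left₀ _ two_ne_zero] at this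
    rw [this, GammaR, mul_div_cancel_left₀ _ two_ne_zero]
    refine mul_ne_zero ?_ (Complex.Gamma_ne_zero_of_re_pos (by simpa using hw))
    simp [Complex.cpow_eq_zero_iff, Real.pi_ne_zero]
  have hi : Integrable (besselKernel 1 0 w.re) := by
    by_contra h
    exact hG (integral_undef h)
  simp only [gammaLInt, enorm_besselKernel_re 1 0 w]
  exact hi.2

/-! ### Givental and Baxter kernels -/

/-- `exp(-x_j)` extended by zero at the last index. -/
def invExt {m : ℕ} (x : Fin m → ℝ) : Fin (m + 1) → ℝ :=
  Fin.snoc (α := fun _ => ℝ) (fun j => Real.exp (-x j)) 0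

/-- The kernel of Givental's recursion. -/
def giventalKernel {m : ℕ} (b : ℂ) (u : Fin (m + 1) → ℝ) (x : Fin m → ℝ) : ℂ :=
  cexp (b * (((∑ j, u j : ℝ) : ℂ) - ((∑ j, x j : ℝ) : ℂ)) -
    ((Real.pi * ∑ j, (Real.exp (u j.castSucc - x j) + Real.exp (x j - u j.succ)) : ℝ) : ℂ))

/-- The kernel of the dual Baxter operator. -/
def baxterKernel {m : ℕ} (c : ℂ) (y x : Fin m → ℝ) : ℂ :=
  cexp (c * (((∑ j, x j : ℝ) : ℂ) - ((∑ j, y j : ℝ) : ℂ)) -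
    ((Real.pi * ∑ j, (Real.exp (x j - y j) + invExt x j.succ * Real.exp (y j)) : ℝ) : ℂ))

@[fun_prop]
theorem continuous_invExt {m : ℕ} (j : Fin (m + 1)) :
    Continuous fun x : Fin m → ℝ => invExt x j := by
  refine Fin.lastCases ?_ (fun i => ?_) j
  · simpa [invExt] using continuous_const
  · simp only [invExt, Fin.snoc_castSucc]; fun_prop

theorem Continuous.givental_kernel {X : Type*} [TopologicalSpace X] {m : ℕ} (b : ℂ)
    {u : X → Fin (m + 1) → ℝ} {x : X → Fin m → ℝ} (hu : Continuous u) (hx : Continuous x) :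
    Continuous fun p => giventalKernel b (u p) (x p) := by
  unfold giventalKernel; fun_prop

theorem Continuous.baxter_kernel {X : Type*} [TopologicalSpace X] {m : ℕ} (c : ℂ)
    {y x : X → Fin m → ℝ} (hy : Continuous y) (hx : Continuous x) :
    Continuous fun p => baxterKernel c (y p) (x p) := by
  have h (j : Fin m) : Continuous fun p => invExt (x p) j.succ :=
    (continuous_invExt _).comp hx
  unfold baxterKernel; fun_prop

/-- The coefficients of `exp(u_j)` in the product of the two kernels. -/
def upCoeff {m : ℕ} (v : Fin (m + 1) → ℝ) (x : Fin m → ℝ) (j : Fin (m + 1)) : ℝ :=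
  Real.exp (-v j) + invExt x j

/-- The coefficients of `exp(-u_j)` in the product of the two kernels. -/
def downCoeff {m : ℕ} (v : Fin (m + 1) → ℝ) (x : Fin m → ℝ) : Fin (m + 1) → ℝ :=
  Fin.cons (α := fun _ => ℝ) 0 (fun i => Real.exp (v i.castSucc) + Real.exp (x i))

theorem invExt_nonneg {m : ℕ} (x : Fin m → ℝ) (j : Fin (m + 1)) : 0 ≤ invExt x j := by
  refine Fin.lastCases ?_ (fun i => ?_) j <;> simp [invExt, Real.exp_nonneg]

theorem upCoeff_pos {m : ℕ} (v : Fin (m + 1) → ℝ) (x : Fin m → ℝ) (j : Fin (m + 1)) :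
    0 < upCoeff v x j := add_pos_of_pos_of_nonneg (Real.exp_pos _) (invExt_nonneg _ _)

theorem downCoeff_succ_pos {m : ℕ} (v : Fin (m + 1) → ℝ) (x : Fin m → ℝ) (j : Fin m) :
    0 < downCoeff v x j.succ := by
  simp only [downCoeff, Fin.cons_succ]; positivity

theorem sum_log_upCoeff {m : ℕ} (v : Fin (m + 1) → ℝ) (x : Fin m → ℝ) :
    ∑ j, Real.log (upCoeff v x j) =
      ∑ j : Fin m, Real.log (downCoeff v x j.succ) - ∑ j, v j - ∑ j, x j := by
  have h (j : Fin m) : Real.log (upCoeff v x j.castSucc) =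
      Real.log (downCoeff v x j.succ) - v j.castSucc - x j := by
    have e : upCoeff v x j.castSucc = downCoeff v x j.succ * Real.exp (-v j.castSucc - x j) := by
      simp only [upCoeff, downCoeff, invExt, Fin.snoc_castSucc, Fin.cons_succ, add_mul,
        ← Real.exp_add]
      ring_nf
    rw [e, Real.log_mul (downCoeff_succ_pos v x j).ne' (Real.exp_ne_zero _), Real.log_exp]
    ring
  have hl : Real.log (upCoeff v x (Fin.last m)) = -v (Fin.last m) := by
    simp [upCoeff, invExt]
  rw [Fin.sum_univ_castSucc, Fin.sum_univ_castSucc (f := v), hl]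
  simp only [h, Finset.sum_sub_distrib]
  ring

theorem baxterKernel_mul_giventalKernel {m : ℕ} (b c : ℂ) (v u : Fin (m + 1) → ℝ)
    (x : Fin m → ℝ) :
    baxterKernel c v u * giventalKernel b u x =
      cexp (-c * ((∑ j, v j : ℝ) : ℂ) - b * ((∑ j, x j : ℝ) : ℂ)) *
        ∏ j, besselKernel (upCoeff v x j) (downCoeff v x j) (b + c) (u j) := by
  have key : ∑ j, (Real.exp (u j - v j) + invExt u j.succ * Real.exp (v j)) +
      ∑ j, (Real.exp (u j.castSucc - x j) + Real.exp (x j - u j.succ)) =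
      ∑ j, (upCoeff v x j * Real.exp (u j) + downCoeff v x j * Real.exp (-u j)) := by
    have h1 : ∑ j : Fin (m + 1), invExt u j.succ * Real.exp (v j) =
        ∑ j : Fin m, Real.exp (v j.castSucc) * Real.exp (-u j.succ) := by
      rw [Fin.sum_univ_castSucc]
      simp [invExt, Fin.succ_castSucc, -Fin.castSucc_succ, mul_comm]
    have h2 : ∑ j, upCoeff v x j * Real.exp (u j) =
        ∑ j, Real.exp (u j - v j) + ∑ j, Real.exp (u j.castSucc - x j) := by
      simp only [upCoeff, add_mul, Finset.sum_add_distrib]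
      congr 1
      · simp [← Real.exp_add, neg_add_eq_sub]
      · rw [Fin.sum_univ_castSucc]
        simp [invExt, ← Real.exp_add, neg_add_eq_sub]
    have h3 : ∑ j, downCoeff v x j * Real.exp (-u j) =
        ∑ j : Fin m, Real.exp (v j.castSucc) * Real.exp (-u j.succ) +
          ∑ j, Real.exp (x j - u j.succ) := by
      rw [Fin.sum_univ_succ]
      simp [downCoeff, add_mul, Finset.sum_add_distrib, ← Real.exp_add, sub_eq_add_neg]
    simp only [Finset.sum_add_distrib]
    rw [h1, h2, h3]
    ring
  simp only [baxterKernel, giventalKernel, besselKernel, ← Complex.exp_sum, ← Complex.exp_add]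
  congr 1
  rw [Finset.sum_sub_distrib, ← Finset.mul_sum, ← Finset.mul_sum]
  have key' := congrArg (fun r : ℝ => (r : ℂ)) key
  simp only [Complex.ofReal_add, Complex.ofReal_sum, Complex.ofReal_mul] at key' ⊢
  rw [← key']
  ring

theorem giventalKernel_mul_baxterKernel {m : ℕ} (b c : ℂ) (v : Fin (m + 1) → ℝ)
    (y x : Fin m → ℝ) :
    giventalKernel b v y * baxterKernel c y x =
      cexp (b * ((∑ j, v j : ℝ) : ℂ) + c * ((∑ j, x j : ℝ) : ℂ)) *
        ∏ j : Fin m, besselKernel (upCoeff v x j.succ) (downCoeff v x j.succ) (-(b + c)) (y j) := by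
  have key : ∑ j, (Real.exp (v j.castSucc - y j) + Real.exp (y j - v j.succ)) +
      ∑ j, (Real.exp (x j - y j) + invExt x j.succ * Real.exp (y j)) =
      ∑ j : Fin m, (upCoeff v x j.succ * Real.exp (y j) +
        downCoeff v x j.succ * Real.exp (-y j)) := by
    rw [← Finset.sum_add_distrib]
    refine Finset.sum_congr rfl fun j _ => ?_
    simp only [upCoeff, downCoeff, Fin.cons_succ, add_mul, sub_eq_add_neg, Real.exp_add]
    ring
  simp only [baxterKernel, giventalKernel, besselKernel, ← Complex.exp_sum, ← Complex.exp_add]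
  congr 1
  rw [Finset.sum_sub_distrib, ← Finset.mul_sum, ← Finset.mul_sum]
  have key' := congrArg (fun r : ℝ => (r : ℂ)) key
  simp only [Complex.ofReal_add, Complex.ofReal_sum, Complex.ofReal_mul] at key' ⊢
  rw [← key']
  ring

theorem exp_intertwining {m : ℕ} (b c : ℂ) (v : Fin (m + 1) → ℝ) (x : Fin m → ℝ) :
    cexp (-c * ((∑ j, v j : ℝ) : ℂ) - b * ((∑ j, x j : ℝ) : ℂ)) *
        cexp (-(b + c) * Real.log (upCoeff v x 0)) =
      cexp (b * ((∑ j, v j : ℝ) : ℂ) + c * ((∑ j, x j : ℝ) : ℂ)) *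
        ∏ j : Fin m, cexp (-(b + c) *
          (Real.log (downCoeff v x j.succ) - Real.log (upCoeff v x j.succ))) := by
  rw [← Complex.exp_sum, ← Complex.exp_add, ← Complex.exp_add, ← Finset.mul_sum]
  congr 1
  have h := congrArg (fun r : ℝ => (r : ℂ)) (sum_log_upCoeff v x)
  rw [Fin.sum_univ_succ] at h
  simp only [Finset.sum_sub_distrib, Complex.ofReal_add, Complex.ofReal_sub,
    Complex.ofReal_sum] at h ⊢
  linear_combination -(b + c) * h

/-- The dual Baxter operator intertwines the Givental operators. -/
theorem integral_baxterKernel_mul_giventalKernel {m : ℕ} (b c : ℂ) (v : Fin (m + 1) → ℝ)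
    (x : Fin m → ℝ) :
    ∫ u, baxterKernel c v u * giventalKernel b u x =
      gammaInt (b + c) * ∫ y, giventalKernel b v y * baxterKernel c y x := by
  simp only [baxterKernel_mul_giventalKernel, giventalKernel_mul_baxterKernel,
    integral_const_mul]
  rw [integral_fintype_prod_volume_eq_prod
      (f := fun j => besselKernel (upCoeff v x j) (downCoeff v x j) (b + c)),
    integral_fintype_prod_volume_eq_prod
      (f := fun j : Fin m =>
        besselKernel (upCoeff v x j.succ) (downCoeff v x j.succ) (-(b + c))),
    Fin.prod_univ_succ]
  simp only [integral_besselKernel_reflect (upCoeff_pos v x _) (downCoeff_succ_pos v x _),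
    Finset.prod_mul_distrib]
  rw [show downCoeff v x 0 = 0 from rfl, integral_besselKernel_zero (upCoeff_pos v x 0)]
  linear_combination (gammaInt (b + c) * ∏ j : Fin m, ∫ u,
    besselKernel (upCoeff v x j.succ) (downCoeff v x j.succ) (b + c) u) * exp_intertwining b c v x

theorem lintegral_baxterKernel_mul_giventalKernel {m : ℕ} (b c : ℂ) (v : Fin (m + 1) → ℝ)
    (x : Fin m → ℝ) :
    ∫⁻ u, ‖baxterKernel c v u‖ₑ * ‖giventalKernel b u x‖ₑ =
      gammaLInt (b + c) * ∫⁻ y, ‖giventalKernel b v y‖ₑ * ‖baxterKernel c y x‖ₑ := by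
  have hp {n : ℕ} (f : Fin n → ℂ) : ‖∏ j, f j‖ₑ = ∏ j, ‖f j‖ₑ := by
    simp [enorm_eq_nnnorm, nnnorm_prod]
  have hm (A B : ℝ) (w : ℂ) : Measurable fun u => ‖besselKernel A B w u‖ₑ :=
    (continuous_besselKernel A B w).measurable.enorm
  have hi := congrArg (fun z : ℂ => ‖z‖ₑ) (exp_intertwining b c v x)
  simp only [enorm_mul, hp] at hi
  simp only [← enorm_mul, baxterKernel_mul_giventalKernel, giventalKernel_mul_baxterKernel]
  simp only [enorm_mul, hp]
  rw [lintegral_const_mul' _ _ enorm_ne_top, lintegral_const_mul' _ _ enorm_ne_top]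
  rw [lintegral_fin_prod_volume_eq_prod
      (fun j u => ‖besselKernel (upCoeff v x j) (downCoeff v x j) (b + c) u‖ₑ) fun _ => hm _ _ _,
    lintegral_fin_prod_volume_eq_prod
      (fun (j : Fin m) u =>
        ‖besselKernel (upCoeff v x j.succ) (downCoeff v x j.succ) (-(b + c)) u‖ₑ) fun _ => hm _ _ _,
    Fin.prod_univ_succ]
  simp only [lintegral_besselKernel_reflect (upCoeff_pos v x _) (downCoeff_succ_pos v x _),
    Finset.prod_mul_distrib]
  rw [show downCoeff v x 0 = 0 from rfl, lintegral_besselKernel_zero (upCoeff_pos v x 0)]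
  rw [← mul_assoc, ← mul_assoc, hi]
  ring

/-! ### Givental's function and the Baxter eigenvalue -/

/-- Givental's integral representation of the class one Whittaker function. -/
def givental : (n : ℕ) → (ℕ → ℂ) → (Fin n → ℝ) → ℂ
  | 0, _, _ => 1
  | n + 1, a, u => ∫ x : Fin n → ℝ, giventalKernel (a 0) u x * givental n (fun j => a (j + 1)) x

/-- The absolute counterpart of `givental`. -/
def giventalAbs : (n : ℕ) → (ℕ → ℂ) → (Fin n → ℝ) → ENNReal
  | 0, _, _ => 1
  | n + 1, a, u =>
      ∫⁻ x : Fin n → ℝ, ‖giventalKernel (a 0) u x‖ₑ * giventalAbs n (fun j => a (j + 1)) x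

theorem givental_succ (n : ℕ) (a : ℕ → ℂ) (u : Fin (n + 1) → ℝ) : givental (n + 1) a u =
    ∫ x : Fin n → ℝ, giventalKernel (a 0) u x * givental n (fun j => a (j + 1)) x := rfl

theorem giventalAbs_succ (n : ℕ) (a : ℕ → ℂ) (u : Fin (n + 1) → ℝ) : giventalAbs (n + 1) a u =
    ∫⁻ x : Fin n → ℝ, ‖giventalKernel (a 0) u x‖ₑ * giventalAbs n (fun j => a (j + 1)) x := rfl

theorem enorm_givental_le (n : ℕ) (a : ℕ → ℂ) (u : Fin n → ℝ) :
    ‖givental n a u‖ₑ ≤ giventalAbs n a u := by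
  induction n generalizing a with
  | zero => simp [givental, giventalAbs]
  | succ n ih =>
    refine (enorm_integral_le_lintegral_enorm _).trans (lintegral_mono fun x => ?_)
    rw [enorm_mul]
    gcongr
    exact ih _ x

@[fun_prop]
theorem stronglyMeasurable_givental (n : ℕ) (a : ℕ → ℂ) : StronglyMeasurable (givental n a) := by
  induction n generalizing a with
  | zero => exact stronglyMeasurable_const
  | succ n ih =>
    exact ((Continuous.givental_kernel (a 0) continuous_fst continuous_snd).stronglyMeasurable.mul
      ((ih _).comp_measurable measurable_snd)).integral_prod_right'

@[fun_prop]
theorem measurable_giventalAbs (n : ℕ) (a : ℕ → ℂ) : Measurable (giventalAbs n a) := by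
  induction n generalizing a with
  | zero => exact measurable_const
  | succ n ih =>
    exact ((Continuous.givental_kernel (a 0) continuous_fst continuous_snd).measurable.enorm.mul
      ((ih _).comp measurable_snd)).lintegral_prod_right'

theorem integral_integral_swap_of_lintegral {p q : ℕ} {f : (Fin p → ℝ) → (Fin q → ℝ) → ℂ}
    (hf : StronglyMeasurable (Function.uncurry f)) (h : ∫⁻ x, ∫⁻ y, ‖f x y‖ₑ < ⊤) :
    ∫ x, ∫ y, f x y = ∫ y, ∫ x, f x y := by
  refine integral_integral_swap ⟨hf.aestronglyMeasurable, ?_⟩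
  rw [HasFiniteIntegral, lintegral_prod _ hf.enorm.aemeasurable]
  exact h

theorem lintegral_baxterKernel_mul_giventalAbs (n : ℕ) (a : ℕ → ℂ) (c : ℂ) (v : Fin n → ℝ) :
    ∫⁻ u, ‖baxterKernel c v u‖ₑ * giventalAbs n a u =
      (∏ j ∈ Finset.range n, gammaLInt (a j + c)) * giventalAbs n a v := by
  induction n generalizing a with
  | zero => simp [giventalAbs, baxterKernel, volume_pi]
  | succ n ih =>
    have hP := measurable_giventalAbs n (fun j => a (j + 1))
    have hG : Measurable fun p : (Fin (n + 1) → ℝ) × (Fin n → ℝ) =>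
        ‖giventalKernel (a 0) p.1 p.2‖ₑ :=
      (Continuous.givental_kernel _ continuous_fst continuous_snd).measurable.enorm
    have hB : Measurable fun p : (Fin n → ℝ) × (Fin n → ℝ) => ‖baxterKernel c p.2 p.1‖ₑ :=
      (Continuous.baxter_kernel _ continuous_snd continuous_fst).measurable.enorm
    have hBv : Measurable fun u => ‖baxterKernel c v u‖ₑ :=
      (Continuous.baxter_kernel _ continuous_const continuous_id).measurable.enorm
    have hGv : Measurable fun x => ‖giventalKernel (a 0) v x‖ₑ :=
      (Continuous.givental_kernel _ continuous_const continuous_id).measurable.enorm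
    have hGu (x : Fin n → ℝ) : Measurable fun u => ‖giventalKernel (a 0) u x‖ₑ :=
      (Continuous.givental_kernel _ continuous_id continuous_const).measurable.enorm
    have hBx (x : Fin n → ℝ) : Measurable fun y => ‖baxterKernel c y x‖ₑ :=
      (Continuous.baxter_kernel _ continuous_id continuous_const).measurable.enorm
    calc
      _ = ∫⁻ u, ∫⁻ x, ‖baxterKernel c v u‖ₑ * ‖giventalKernel (a 0) u x‖ₑ *
            giventalAbs n (fun j => a (j + 1)) x := by
        simp only [giventalAbs, ← lintegral_const_mul' _ _ enorm_ne_top, mul_assoc]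
      _ = ∫⁻ x, (∫⁻ u, ‖baxterKernel c v u‖ₑ * ‖giventalKernel (a 0) u x‖ₑ) *
            giventalAbs n (fun j => a (j + 1)) x := by
        rw [lintegral_lintegral_swap (((hBv.comp measurable_fst).mul hG).mul
          (hP.comp measurable_snd)).aemeasurable]
        refine lintegral_congr fun x => lintegral_mul_const _ (hBv.mul (hGu x))
      _ = gammaLInt (a 0 + c) * ∫⁻ x, ∫⁻ y, ‖giventalKernel (a 0) v y‖ₑ *
            (‖baxterKernel c y x‖ₑ * giventalAbs n (fun j => a (j + 1)) x) := by
        have hm : Measurable fun p : (Fin n → ℝ) × (Fin n → ℝ) =>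
            ‖giventalKernel (a 0) v p.2‖ₑ *
              (‖baxterKernel c p.2 p.1‖ₑ * giventalAbs n (fun j => a (j + 1)) p.1) :=
          (hGv.comp measurable_snd).mul (hB.mul (hP.comp measurable_fst))
        rw [← lintegral_const_mul _ hm.lintegral_prod_right']
        refine lintegral_congr fun x => ?_
        rw [lintegral_baxterKernel_mul_giventalKernel, mul_assoc,
          ← lintegral_mul_const _ (hGv.fun_mul (hBx x))]
        simp only [mul_assoc]
      _ = gammaLInt (a 0 + c) * ∫⁻ y, ‖giventalKernel (a 0) v y‖ₑ *
            ((∏ j ∈ Finset.range n, gammaLInt (a (j + 1) + c)) *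
              giventalAbs n (fun j => a (j + 1)) y) := by
        rw [lintegral_lintegral_swap ((hGv.comp measurable_snd).mul
          (hB.mul (hP.comp measurable_fst))).aemeasurable]
        congr 1
        refine lintegral_congr fun y => ?_
        rw [lintegral_const_mul' _ _ enorm_ne_top, ih]
      _ = _ := by
        simp only [mul_left_comm _ (∏ j ∈ Finset.range n, gammaLInt (a (j + 1) + c))]
        rw [lintegral_const_mul _ (hGv.fun_mul hP), Finset.prod_range_succ', giventalAbs]
        ring

theorem prod_gammaLInt_lt_top {n : ℕ} {a : ℕ → ℂ} {c : ℂ} (h : ∀ j < n, 0 < (a j + c).re) :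
    ∏ j ∈ Finset.range n, gammaLInt (a j + c) < ⊤ :=
  ENNReal.prod_lt_top fun j hj => gammaLInt_lt_top (h j (Finset.mem_range.1 hj))

theorem integral_baxterKernel_mul_givental (n : ℕ) (a : ℕ → ℂ) (c : ℂ)
    (hac : ∀ j < n, 0 < (a j + c).re) (v : Fin n → ℝ) (hv : giventalAbs n a v < ⊤) :
    ∫ u, baxterKernel c v u * givental n a u =
      (∏ j ∈ Finset.range n, gammaInt (a j + c)) * givental n a v := by
  induction n generalizing a with
  | zero => simp [givental, baxterKernel, volume_pi, Measure.real]
  | succ n ih =>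
    have hac' : ∀ j < n, 0 < (a (j + 1) + c).re := fun j hj => hac (j + 1) (by omega)
    have hP := stronglyMeasurable_givental n (fun j => a (j + 1))
    have hG : StronglyMeasurable fun p : (Fin (n + 1) → ℝ) × (Fin n → ℝ) =>
        giventalKernel (a 0) p.1 p.2 :=
      (Continuous.givental_kernel _ continuous_fst continuous_snd).stronglyMeasurable
    have hB : StronglyMeasurable fun p : (Fin n → ℝ) × (Fin n → ℝ) => baxterKernel c p.1 p.2 :=
      (Continuous.baxter_kernel _ continuous_fst continuous_snd).stronglyMeasurable
    have hBv : StronglyMeasurable fun u => baxterKernel c v u :=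
      (Continuous.baxter_kernel _ continuous_const continuous_id).stronglyMeasurable
    have hGv : StronglyMeasurable fun x => giventalKernel (a 0) v x :=
      (Continuous.givental_kernel _ continuous_const continuous_id).stronglyMeasurable
    have hfin : ∀ᵐ y, giventalAbs n (fun j => a (j + 1)) y < ⊤ := by
      have hm : Measurable fun x => ‖giventalKernel (a 0) v x‖ₑ *
          giventalAbs n (fun j => a (j + 1)) x :=
        hGv.measurable.enorm.mul (measurable_giventalAbs _ _)
      filter_upwards [ae_lt_top hm hv.ne] with y hy
      refine (ENNReal.lt_top_of_mul_ne_top_right hy.ne ?_)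
      simp [giventalKernel]
    calc
      _ = ∫ u, ∫ x, baxterKernel c v u * giventalKernel (a 0) u x *
            givental n (fun j => a (j + 1)) x := by
        simp only [givental, ← integral_const_mul, mul_assoc]
      _ = ∫ x, (∫ u, baxterKernel c v u * giventalKernel (a 0) u x) *
            givental n (fun j => a (j + 1)) x := by
        rw [integral_integral_swap_of_lintegral]
        · simp only [integral_mul_const]
        · exact ((hBv.comp_measurable measurable_fst).mul hG).mul
            (hP.comp_measurable measurable_snd)
        · refine lt_of_le_of_lt ?_ (ENNReal.mul_lt_top (prod_gammaLInt_lt_top hac) hv)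
          rw [← lintegral_baxterKernel_mul_giventalAbs]
          refine lintegral_mono fun u => ?_
          rw [giventalAbs, ← lintegral_const_mul' _ _ enorm_ne_top]
          refine lintegral_mono fun x => ?_
          rw [enorm_mul, enorm_mul, mul_assoc]
          gcongr
          exact enorm_givental_le _ _ _
      _ = gammaInt (a 0 + c) * ∫ x, ∫ y, giventalKernel (a 0) v y *
            (baxterKernel c y x * givental n (fun j => a (j + 1)) x) := by
        simp only [integral_baxterKernel_mul_giventalKernel, ← integral_const_mul,
          ← integral_mul_const, mul_assoc]
      _ = gammaInt (a 0 + c) * ∫ y, giventalKernel (a 0) v y *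
            ((∏ j ∈ Finset.range n, gammaInt (a (j + 1) + c)) *
              givental n (fun j => a (j + 1)) y) := by
        congr 1
        rw [← integral_integral_swap_of_lintegral]
        · refine integral_congr_ae ?_
          filter_upwards [hfin] with y hy
          rw [integral_const_mul, ih _ hac' y hy]
        · exact (hGv.comp_measurable measurable_fst).mul
            (hB.mul (hP.comp_measurable measurable_snd))
        · refine lt_of_le_of_lt (b := ∫⁻ y, (∏ j ∈ Finset.range n, gammaLInt (a (j + 1) + c)) *
            (‖giventalKernel (a 0) v y‖ₑ * giventalAbs n (fun j => a (j + 1)) y)) ?_ ?_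
          · refine lintegral_mono fun y => ?_
            rw [mul_left_comm, ← lintegral_baxterKernel_mul_giventalAbs,
              ← lintegral_const_mul' _ _ enorm_ne_top]
            refine lintegral_mono fun x => ?_
            rw [enorm_mul, enorm_mul]
            gcongr
            exact enorm_givental_le _ _ _
          · have := prod_gammaLInt_lt_top hac'
            rw [lintegral_const_mul' _ _ this.ne]
            exact ENNReal.mul_lt_top this hv
      _ = _ := by
        simp only [mul_left_comm _ (∏ j ∈ Finset.range n, gammaInt (a (j + 1) + c))]
        rw [integral_const_mul, Finset.prod_range_succ', givental]
        ring

/-! ### Stade's identity in logarithmic coordinates -/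

/-- `exp(-π e^{u_m})`, with `u_m` the last coordinate. -/
def lastWeight {m : ℕ} (u : Fin (m + 1) → ℝ) : ℂ :=
  cexp (-((Real.pi * Real.exp (u (Fin.last m)) : ℝ) : ℂ))

/-- Append a zero coordinate. -/
def snocZero {m : ℕ} (x : Fin m → ℝ) : Fin (m + 1) → ℝ := Fin.snoc (α := fun _ => ℝ) x 0

@[simp]
theorem snocZero_apply_zero (x : Fin 0 → ℝ) : snocZero x 0 = 0 := by
  simp [snocZero, Fin.snoc]

theorem continuous_snocZero {m : ℕ} : Continuous (snocZero (m := m)) := by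
  refine continuous_pi fun j => ?_
  refine Fin.lastCases ?_ (fun i => ?_) j
  · simpa [snocZero] using continuous_const
  · simpa [snocZero] using continuous_apply i

theorem continuous_lastWeight {m : ℕ} : Continuous (lastWeight (m := m)) := by
  unfold lastWeight; fun_prop

theorem lastWeight_mul_giventalKernel {m : ℕ} (c : ℂ) (u : Fin (m + 1) → ℝ) (x : Fin m → ℝ) :
    lastWeight u * giventalKernel c u x = baxterKernel c (snocZero x) u := by
  have h1 : ∑ j : Fin (m + 1), invExt u j.succ * Real.exp (snocZero x j) =
      ∑ j : Fin m, Real.exp (x j - u j.succ) := by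
    rw [Fin.sum_univ_castSucc]
    simp [invExt, snocZero, Fin.succ_castSucc, -Fin.castSucc_succ, ← Real.exp_add,
      neg_add_eq_sub]
  have h2 : ∑ j : Fin (m + 1), Real.exp (u j - snocZero x j) =
      ∑ j : Fin m, Real.exp (u j.castSucc - x j) + Real.exp (u (Fin.last m)) := by
    rw [Fin.sum_univ_castSucc]
    simp [snocZero]
  have h3 : ∑ j, snocZero x j = ∑ j, x j := by simp [snocZero, Fin.sum_univ_castSucc]
  rw [lastWeight, giventalKernel, baxterKernel, ← Complex.exp_add]
  congr 1
  rw [Finset.sum_add_distrib, Finset.sum_add_distrib, h1, h2, h3]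
  push_cast
  ring

theorem giventalKernel_snocZero {m : ℕ} (b : ℂ) (v w : Fin (m + 1) → ℝ) :
    giventalKernel b (snocZero v) w = lastWeight w * baxterKernel b w v := by
  have h1 : ∑ j : Fin (m + 1), invExt v j.succ * Real.exp (w j) =
      ∑ j : Fin m, Real.exp (w j.castSucc - v j.succ) := by
    rw [Fin.sum_univ_castSucc]
    simp [invExt, Fin.succ_castSucc, -Fin.castSucc_succ, ← Real.exp_add, neg_add_eq_sub]
  have h2 : ∑ j : Fin (m + 1), Real.exp (w j - snocZero v j.succ) =
      ∑ j : Fin m, Real.exp (w j.castSucc - v j.succ) + Real.exp (w (Fin.last m)) := by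
    rw [Fin.sum_univ_castSucc]
    simp [snocZero, Fin.succ_castSucc, -Fin.castSucc_succ]
  have h3 : ∑ j, snocZero v j = ∑ j, v j := by
    rw [Fin.sum_univ_castSucc]; simp [snocZero]
  have h4 : ∑ j, Real.exp (snocZero v (Fin.castSucc j) - w j) = ∑ j, Real.exp (v j - w j) := by
    simp [snocZero]
  rw [lastWeight, giventalKernel, baxterKernel, ← Complex.exp_add]
  congr 1
  rw [Finset.sum_add_distrib, Finset.sum_add_distrib, h1, h2, h3, h4]
  push_cast
  ring

/-- The `GL_{m+1} × GL_{m+1}` pairing in logarithmic coordinates. -/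
def equalRankPairing (m : ℕ) (a a' : ℕ → ℂ) : ℂ :=
  ∫ u : Fin (m + 1) → ℝ, lastWeight u * givental (m + 1) a u * givental (m + 1) a' u

/-- The `GL_{m+1} × GL_m` pairing in logarithmic coordinates. -/
def unequalRankPairing (m : ℕ) (a a' : ℕ → ℂ) : ℂ :=
  ∫ v : Fin m → ℝ, givental (m + 1) a (snocZero v) * givental m a' v

/-- The absolute counterpart of `equalRankPairing`. -/
def equalRankPairingAbs (m : ℕ) (a a' : ℕ → ℂ) : ENNReal :=
  ∫⁻ u : Fin (m + 1) → ℝ, ‖lastWeight u‖ₑ * giventalAbs (m + 1) a u * giventalAbs (m + 1) a' u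

/-- The absolute counterpart of `unequalRankPairing`. -/
def unequalRankPairingAbs (m : ℕ) (a a' : ℕ → ℂ) : ENNReal :=
  ∫⁻ v : Fin m → ℝ, giventalAbs (m + 1) a (snocZero v) * giventalAbs m a' v

theorem equalRankPairingAbs_eq_lintegral (m : ℕ) (a a' : ℕ → ℂ) :
    equalRankPairingAbs m a a' = ∫⁻ u, ∫⁻ x, ‖baxterKernel (a' 0) (snocZero x) u‖ₑ *
      giventalAbs (m + 1) a u * giventalAbs m (fun j => a' (j + 1)) x := by
  refine lintegral_congr fun u => ?_
  have hm : Measurable fun x => ‖giventalKernel (a' 0) u x‖ₑ *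
      giventalAbs m (fun j => a' (j + 1)) x :=
    (Continuous.givental_kernel _ continuous_const continuous_id).measurable.enorm.mul
      (measurable_giventalAbs _ _)
  rw [giventalAbs_succ _ a', ← lintegral_const_mul _ hm]
  refine lintegral_congr fun x => ?_
  rw [← lastWeight_mul_giventalKernel, enorm_mul]
  ring

theorem measurable_baxterKernel_snocZero_mul (m : ℕ) (a a' : ℕ → ℂ) (c : ℂ) :
    Measurable fun p : (Fin (m + 1) → ℝ) × (Fin m → ℝ) => ‖baxterKernel c (snocZero p.2) p.1‖ₑ *
      giventalAbs (m + 1) a p.1 * giventalAbs m a' p.2 :=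
  ((Continuous.baxter_kernel _ (continuous_snocZero.comp continuous_snd)
    continuous_fst).measurable.enorm.mul ((measurable_giventalAbs _ _).comp measurable_fst)).mul
    ((measurable_giventalAbs _ _).comp measurable_snd)

theorem equalRankPairingAbs_eq (m : ℕ) (a a' : ℕ → ℂ) :
    equalRankPairingAbs m a a' = (∏ j ∈ Finset.range (m + 1), gammaLInt (a j + a' 0)) *
      unequalRankPairingAbs m a (fun j => a' (j + 1)) := by
  rw [equalRankPairingAbs_eq_lintegral,
    lintegral_lintegral_swap (measurable_baxterKernel_snocZero_mul _ _ _ _).aemeasurable,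
    unequalRankPairingAbs, ← lintegral_const_mul _
      (Measurable.fun_mul (f := fun v => giventalAbs (m + 1) a (snocZero v))
        ((measurable_giventalAbs _ _).comp continuous_snocZero.measurable)
        (measurable_giventalAbs _ _))]
  refine lintegral_congr fun x => ?_
  rw [lintegral_mul_const, lintegral_baxterKernel_mul_giventalAbs]
  · rw [mul_assoc]
  · exact (Continuous.baxter_kernel _ continuous_const continuous_id).measurable.enorm.mul
      (measurable_giventalAbs _ _)

theorem unequalRankPairingAbs_eq_lintegral (m : ℕ) (a a' : ℕ → ℂ) :
    unequalRankPairingAbs (m + 1) a a' = ∫⁻ v, ∫⁻ w, ‖lastWeight w‖ₑ *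
      giventalAbs (m + 1) (fun j => a (j + 1)) w *
        (‖baxterKernel (a 0) w v‖ₑ * giventalAbs (m + 1) a' v) := by
  refine lintegral_congr fun v => ?_
  have hm : Measurable fun x => ‖giventalKernel (a 0) (snocZero v) x‖ₑ *
      giventalAbs (m + 1) (fun j => a (j + 1)) x :=
    (Continuous.givental_kernel _ continuous_const continuous_id).measurable.enorm.mul
      (measurable_giventalAbs _ _)
  rw [giventalAbs_succ _ a, ← lintegral_mul_const _ hm]
  refine lintegral_congr fun w => ?_
  rw [giventalKernel_snocZero, enorm_mul]
  ring

theorem measurable_lastWeight_mul_baxterKernel (m : ℕ) (a a' : ℕ → ℂ) (c : ℂ) :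
    Measurable fun p : (Fin (m + 1) → ℝ) × (Fin (m + 1) → ℝ) => ‖lastWeight p.2‖ₑ *
      giventalAbs (m + 1) a p.2 * (‖baxterKernel c p.2 p.1‖ₑ * giventalAbs (m + 1) a' p.1) :=
  ((continuous_lastWeight.comp continuous_snd).measurable.enorm.mul
    ((measurable_giventalAbs _ _).comp measurable_snd)).mul
    ((Continuous.baxter_kernel _ continuous_snd continuous_fst).measurable.enorm.mul
      ((measurable_giventalAbs _ _).comp measurable_fst))

theorem unequalRankPairingAbs_eq (m : ℕ) (a a' : ℕ → ℂ) :
    unequalRankPairingAbs (m + 1) a a' =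
      (∏ j ∈ Finset.range (m + 1), gammaLInt (a' j + a 0)) *
        equalRankPairingAbs m (fun j => a (j + 1)) a' := by
  rw [unequalRankPairingAbs_eq_lintegral,
    lintegral_lintegral_swap (measurable_lastWeight_mul_baxterKernel _ _ _ _).aemeasurable,
    equalRankPairingAbs, ← lintegral_const_mul _
      ((continuous_lastWeight.measurable.enorm.fun_mul (measurable_giventalAbs _ _)).fun_mul
        (measurable_giventalAbs _ _))]
  refine lintegral_congr fun w => ?_
  rw [lintegral_const_mul, lintegral_baxterKernel_mul_giventalAbs]
  · ring
  · exact (Continuous.baxter_kernel _ continuous_const continuous_id).measurable.enorm.mul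
      (measurable_giventalAbs _ _)

theorem unequalRankPairingAbs_lt_top (m : ℕ) (a a' : ℕ → ℂ)
    (h : ∀ j ≤ m, ∀ k < m, 0 < (a j + a' k).re) : unequalRankPairingAbs m a a' < ⊤ := by
  induction m generalizing a a' with
  | zero => simp [unequalRankPairingAbs, giventalAbs, giventalKernel, volume_pi]
  | succ m ih =>
    rw [unequalRankPairingAbs_eq, equalRankPairingAbs_eq]
    refine ENNReal.mul_lt_top (prod_gammaLInt_lt_top fun j hj => ?_)
      (ENNReal.mul_lt_top (prod_gammaLInt_lt_top fun j hj => ?_) (ih _ _ fun j hj k hk => ?_))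
    · rw [add_comm]; exact h 0 (by omega) j hj
    · exact h (j + 1) (by omega) 0 (by omega)
    · exact h (j + 1) (by omega) (k + 1) (by omega)

theorem equalRankPairingAbs_lt_top (m : ℕ) (a a' : ℕ → ℂ)
    (h : ∀ j ≤ m, ∀ k ≤ m, 0 < (a j + a' k).re) : equalRankPairingAbs m a a' < ⊤ := by
  rw [equalRankPairingAbs_eq]
  exact ENNReal.mul_lt_top (prod_gammaLInt_lt_top fun j hj => h j (by omega) 0 (by omega))
    (unequalRankPairingAbs_lt_top _ _ _ fun j hj k hk => h j hj (k + 1) (by omega))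

theorem equalRankPairing_eq (m : ℕ) (a a' : ℕ → ℂ)
    (h : ∀ j ≤ m, ∀ k ≤ m, 0 < (a j + a' k).re) :
    equalRankPairing m a a' = (∏ j ∈ Finset.range (m + 1), gammaInt (a j + a' 0)) *
      unequalRankPairing m a (fun j => a' (j + 1)) := by
  have hae : ∀ᵐ x, giventalAbs (m + 1) a (snocZero x) *
      giventalAbs m (fun j => a' (j + 1)) x < ⊤ :=
    ae_lt_top (((measurable_giventalAbs _ _).comp continuous_snocZero.measurable).fun_mul
      (measurable_giventalAbs _ _)) (unequalRankPairingAbs_lt_top m a (fun j => a' (j + 1))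
        fun j hj k hk => h j hj (k + 1) (by omega)).ne
  calc
    _ = ∫ u, ∫ x, baxterKernel (a' 0) (snocZero x) u * givental (m + 1) a u *
          givental m (fun j => a' (j + 1)) x := by
      refine integral_congr_ae (.of_forall fun u => ?_)
      simp only [givental_succ _ a', ← integral_const_mul, ← lastWeight_mul_giventalKernel]
      congr 1
      funext x
      ring
    _ = ∫ x, (∏ j ∈ Finset.range (m + 1), gammaInt (a j + a' 0)) *
          (givental (m + 1) a (snocZero x) * givental m (fun j => a' (j + 1)) x) := by
      rw [integral_integral_swap_of_lintegral]
      · refine integral_congr_ae ?_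
        filter_upwards [hae] with x hx
        rw [integral_mul_const]
        by_cases h0 : giventalAbs m (fun j => a' (j + 1)) x = 0
        · have : givental m (fun j => a' (j + 1)) x = 0 := by
            simpa [h0] using enorm_givental_le m (fun j => a' (j + 1)) x
          simp [this]
        · rw [integral_baxterKernel_mul_givental _ _ _ (fun j hj => h j (by omega) 0 (by omega)) _
            (ENNReal.lt_top_of_mul_ne_top_left hx.ne h0), mul_assoc]
      · exact (((Continuous.baxter_kernel _ (continuous_snocZero.comp continuous_snd)
          continuous_fst).stronglyMeasurable.mul
          ((stronglyMeasurable_givental _ _).comp_measurable measurable_fst)).mul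
          ((stronglyMeasurable_givental _ _).comp_measurable measurable_snd))
      · refine lt_of_le_of_lt ?_ (equalRankPairingAbs_lt_top m a a' h)
        rw [equalRankPairingAbs_eq_lintegral]
        refine lintegral_mono fun u => lintegral_mono fun x => ?_
        rw [enorm_mul, enorm_mul]
        gcongr <;> exact enorm_givental_le _ _ _
    _ = _ := integral_const_mul _ _

theorem unequalRankPairing_eq (m : ℕ) (a a' : ℕ → ℂ)
    (h : ∀ j ≤ m + 1, ∀ k ≤ m, 0 < (a j + a' k).re) :
    unequalRankPairing (m + 1) a a' = (∏ j ∈ Finset.range (m + 1), gammaInt (a' j + a 0)) *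
      equalRankPairing m (fun j => a (j + 1)) a' := by
  have hae : ∀ᵐ w, ‖lastWeight w‖ₑ * giventalAbs (m + 1) (fun j => a (j + 1)) w *
      giventalAbs (m + 1) a' w < ⊤ :=
    ae_lt_top ((continuous_lastWeight.measurable.enorm.fun_mul (measurable_giventalAbs _ _)).fun_mul
      (measurable_giventalAbs _ _)) (equalRankPairingAbs_lt_top m (fun j => a (j + 1)) a'
        fun j hj k hk => h (j + 1) (by omega) k hk).ne
  calc
    _ = ∫ v, ∫ w, lastWeight w * givental (m + 1) (fun j => a (j + 1)) w *
          (baxterKernel (a 0) w v * givental (m + 1) a' v) := by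
      refine integral_congr_ae (.of_forall fun v => ?_)
      simp only [givental_succ _ a, ← integral_mul_const, giventalKernel_snocZero]
      congr 1
      funext x
      ring
    _ = ∫ w, (∏ j ∈ Finset.range (m + 1), gammaInt (a' j + a 0)) *
          (lastWeight w * givental (m + 1) (fun j => a (j + 1)) w * givental (m + 1) a' w) := by
      rw [integral_integral_swap_of_lintegral]
      · refine integral_congr_ae ?_
        filter_upwards [hae] with w hw
        rw [integral_const_mul]
        by_cases h0 : ‖lastWeight w‖ₑ * giventalAbs (m + 1) (fun j => a (j + 1)) w = 0
        · have : givental (m + 1) (fun j => a (j + 1)) w = 0 := by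
            have h1 : giventalAbs (m + 1) (fun j => a (j + 1)) w = 0 := by
              simpa [lastWeight] using h0
            simpa [h1] using enorm_givental_le (m + 1) (fun j => a (j + 1)) w
          simp [this]
        · rw [integral_baxterKernel_mul_givental _ _ _ (fun j hj => ?_) _
            (ENNReal.lt_top_of_mul_ne_top_right hw.ne h0)]
          · ring
          · rw [add_comm]; exact h 0 (by omega) j (by omega)
      · exact (((continuous_lastWeight.comp continuous_snd).stronglyMeasurable.mul
          ((stronglyMeasurable_givental _ _).comp_measurable measurable_snd)).mul
          ((Continuous.baxter_kernel _ continuous_snd continuous_fst).stronglyMeasurable.mul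
          ((stronglyMeasurable_givental _ _).comp_measurable measurable_fst)))
      · refine lt_of_le_of_lt ?_ (unequalRankPairingAbs_lt_top (m + 1) a a'
          fun j hj k hk => h j hj k (by omega))
        rw [unequalRankPairingAbs_eq_lintegral]
        refine lintegral_mono fun u => lintegral_mono fun x => ?_
        rw [enorm_mul, enorm_mul, enorm_mul]
        gcongr <;> exact enorm_givental_le _ _ _
    _ = _ := integral_const_mul _ _

theorem equalRankPairing_eq_prod (m : ℕ) (a a' : ℕ → ℂ)
    (h : ∀ j ≤ m, ∀ k ≤ m, 0 < (a j + a' k).re) :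
    equalRankPairing m a a' = ∏ j ∈ Finset.range (m + 1), ∏ k ∈ Finset.range (m + 1),
      gammaInt (a j + a' k) := by
  induction m generalizing a a' with
  | zero =>
    rw [equalRankPairing_eq _ _ _ h]
    simp [unequalRankPairing, givental, giventalKernel, volume_pi, Measure.real]
  | succ m ih =>
    rw [equalRankPairing_eq _ _ _ h,
      unequalRankPairing_eq _ _ _ (fun j hj k hk => h j hj (k + 1) (by omega)),
      ih _ _ (fun j hj k hk => h (j + 1) (by omega) (k + 1) (by omega))]
    simp only [Finset.prod_range_succ' _ (m + 1), Finset.prod_mul_distrib]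
    simp only [add_comm (a 0)]
    ring

/-! ### Logarithmic coordinates -/

theorem ofReal_exp_cpow (x : ℝ) (w : ℂ) : ((Real.exp x : ℝ) : ℂ) ^ w = cexp (w * x) := by
  rw [Complex.cpow_def_of_ne_zero (by simp), ← Complex.ofReal_log (Real.exp_pos x).le,
    Real.log_exp, mul_comm]

@[simp]
theorem extR_coe {k : ℕ} (t : Fin k → ℝ) (j : Fin k) : extR t j = t j := by
  simp [extR]

theorem integral_posSet_eq_integral_exp_smul {E : Type*} [NormedAddCommGroup E] [NormedSpace ℝ E]
    {k : ℕ} (f : (Fin k → ℝ) → E) :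
    ∫ t in posSet k, f t =
      ∫ τ : Fin k → ℝ, (∏ j, Real.exp (τ j)) • f (fun j => Real.exp (τ j)) := by
  let F : (Fin k → ℝ) → Fin k → ℝ := fun τ j => Real.exp (τ j)
  let F' : (Fin k → ℝ) → (Fin k → ℝ) →L[ℝ] (Fin k → ℝ) := fun τ =>
    ContinuousLinearMap.pi fun j =>
      Real.exp (τ j) • ContinuousLinearMap.proj (R := ℝ) (φ := fun _ : Fin k => ℝ) j
  have hF' (τ : Fin k → ℝ) : HasFDerivAt F (F' τ) τ :=
    hasFDerivAt_pi.2 fun j => (hasFDerivAt_apply j τ).exp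
  have hdet (τ : Fin k → ℝ) : (F' τ).det = ∏ j, Real.exp (τ j) := by
    have : (F' τ : (Fin k → ℝ) →ₗ[ℝ] (Fin k → ℝ)) =
        Matrix.toLin' (Matrix.diagonal fun j => Real.exp (τ j)) := by
      ext i j
      simp [F', Matrix.mulVec_diagonal]
    rw [ContinuousLinearMap.det, this, LinearMap.det_toLin', Matrix.det_diagonal]
  have hinj : Function.Injective F := fun x y h => by
    funext j
    exact Real.exp_injective (congrFun h j)
  have himage : Set.image F Set.univ = posSet k := by
    ext t
    refine ⟨?_, fun ht => ⟨fun j => Real.log (t j), trivial, ?_⟩⟩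
    · rintro ⟨τ, -, rfl⟩ j
      exact Real.exp_pos _
    · funext j
      exact Real.exp_log (ht j)
  have h := integral_image_eq_integral_abs_det_fderiv_smul volume MeasurableSet.univ
    (fun τ _ => (hF' τ).hasFDerivWithinAt) hinj.injOn f
  rw [himage, setIntegral_univ] at h
  rw [h]
  refine integral_congr_ae (.of_forall fun τ => ?_)
  simp only [hdet]
  rw [abs_of_nonneg (Finset.prod_nonneg fun j _ => (Real.exp_pos _).le)]

theorem giventalKernel_add_right {m : ℕ} (b c : ℂ) (u : Fin (m + 1) → ℝ) (x : Fin m → ℝ) :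
    giventalKernel (b + c) u x * cexp (c * ((∑ j, x j : ℝ) : ℂ)) =
      cexp (c * ((∑ j, u j : ℝ) : ℂ)) * giventalKernel b u x := by
  unfold giventalKernel
  rw [← Complex.exp_add, ← Complex.exp_add]
  congr 1
  ring

theorem givental_add_const (n : ℕ) (a : ℕ → ℂ) (c : ℂ) (u : Fin n → ℝ) :
    givental n (fun j => a j + c) u = cexp (c * ((∑ j, u j : ℝ) : ℂ)) * givental n a u := by
  induction n generalizing a with
  | zero => simp [givental]
  | succ n ih =>
    rw [givental_succ, givental_succ, ← integral_const_mul]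
    congr 1
    funext x
    rw [ih, ← mul_assoc, giventalKernel_add_right, mul_assoc]

theorem sum_sub_mul_consecutive_sub (m : ℕ) (u : Fin (m + 1) → ℂ) :
    ∑ j : Fin m, ((m : ℂ) - (j : ℕ)) * (u j.castSucc - u j.succ) =
      m * u 0 - ∑ j : Fin m, u j.succ := by
  induction m with
  | zero => simp
  | succ m ih =>
    have h := ih (fun j => u j.succ)
    rw [Fin.sum_univ_succ, Fin.sum_univ_succ (f := fun j => u (Fin.succ j))]
    simp only [Fin.val_zero, Fin.val_succ, Fin.castSucc_zero, ← Fin.succ_castSucc] at *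
    push_cast
    simp only [add_sub_add_right_eq_sub, h]
    simp
    ring

theorem sum_succ_mul_consecutive_sub (m : ℕ) (u : Fin (m + 1) → ℂ) :
    ∑ j : Fin m, (((j : ℕ) : ℂ) + 1) * (u j.castSucc - u j.succ) =
      ∑ j : Fin m, u j.castSucc - m * u (Fin.last m) := by
  induction m with
  | zero => simp
  | succ m ih =>
    have h := ih (fun j => u j.castSucc)
    rw [Fin.sum_univ_castSucc, Fin.sum_univ_castSucc (f := fun j => u (Fin.castSucc j))]
    simp only [Fin.val_castSucc, Fin.succ_castSucc, h, Fin.val_last, Fin.succ_last]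
    push_cast
    ring

theorem sum_fin_sub_coe (m : ℕ) : ∑ j : Fin m, ((m : ℂ) - (j : ℕ)) = m * (m + 1) / 2 := by
  induction m with
  | zero => simp
  | succ m ih =>
    rw [Fin.sum_univ_succ]
    simp only [Fin.val_zero, Fin.val_succ]
    push_cast
    simp only [add_sub_add_right_eq_sub, ih]
    ring

/-! ### The Whittaker function as Givental's function -/

theorem giventalKernel_half_eq_prod {N : ℕ} (hN : N ≠ 0) (b : ℂ) (L : ℂ)
    (u : Fin (N + 1) → ℝ) (x : Fin N → ℝ) :
    ∏ j : Fin N,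
      (cexp ((-(Real.pi * (Real.exp (u j.castSucc - x j) + Real.exp (x j - u j.succ))) : ℝ) : ℂ) *
        cexp (((N : ℂ) - (j : ℕ)) * b / N * (L + (u j.castSucc - u j.succ) / 2)) *
        cexp (((N : ℂ) + 1) * b / (2 * N) * (u j.succ - L - x j))) =
      giventalKernel (b / 2) u x * cexp (-(b / (2 * N)) * ((∑ j, x j : ℝ) : ℂ)) := by
  have hN' : (N : ℂ) ≠ 0 := by exact_mod_cast hN
  have h1 := sum_sub_mul_consecutive_sub N (fun j => (u j : ℂ))
  have h2 := sum_fin_sub_coe N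
  have h3 : ∑ j, (u j : ℂ) = u 0 + ∑ j : Fin N, (u j.succ : ℂ) := Fin.sum_univ_succ _
  rw [giventalKernel]
  generalize hQ : (fun j : Fin N => Real.exp (u j.castSucc - x j) + Real.exp (x j - u j.succ)) = Q
  simp only [← Complex.exp_add, funext_iff] at hQ ⊢
  rw [← Complex.exp_sum]
  congr 1
  have e (j : Fin N) : ((-(Real.pi * Q j) : ℝ) : ℂ) +
      ((N : ℂ) - (j : ℕ)) * b / N * (L + (u j.castSucc - u j.succ) / 2) +
      ((N : ℂ) + 1) * b / (2 * N) * (u j.succ - L - x j) =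
      -Real.pi * (Q j : ℂ) + b / N * L * ((N : ℂ) - (j : ℕ)) +
        b / (2 * N) * (((N : ℂ) - (j : ℕ)) * (u j.castSucc - u j.succ)) +
        ((N : ℂ) + 1) * b / (2 * N) * (u j.succ : ℂ) - ((N : ℂ) + 1) * b / (2 * N) * L -
        ((N : ℂ) + 1) * b / (2 * N) * x j := by
    push_cast
    ring
  simp only [hQ, e, Finset.sum_add_distrib, Finset.sum_sub_distrib, ← Finset.mul_sum, h1, h2]
  push_cast
  rw [h3]
  simp only [Finset.sum_const, Finset.card_univ, Fintype.card_fin, nsmul_eq_mul]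
  field_simp
  ring

theorem givental_two (a : ℕ → ℂ) (u : Fin 2 → ℝ) :
    givental 2 a u = ∫ x : ℝ, cexp (a 0 * (u 0 + u 1 - x) + a 1 * x -
      ((Real.pi * (Real.exp (u 0 - x) + Real.exp (x - u 1)) : ℝ) : ℂ)) := by
  refine ((volume_preserving_funUnique (Fin 1) ℝ).symm.integral_comp'
    (g := fun x => giventalKernel (a 0) u x * givental 1 (fun j => a (j + 1)) x)).symm.trans ?_
  congr 1
  funext x
  simp [givental, giventalKernel, volume_pi, Measure.real, Fin.sum_univ_two,
    -Complex.ofReal_exp, ← Complex.exp_add]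
  ring_nf

theorem WhittAr_two_eq_givental (a : ℕ → ℂ) (y : ℕ → ℝ) (u : Fin 2 → ℝ)
    (hy : y 0 = Real.exp ((u 0 - u 1) / 2)) :
    WhittAr 2 a y =
      cexp (-(sumA 2 a) / 2 * u 1) * givental 2 (fun j => a j / 2) u := by
  rw [WhittAr, BesselK, integral_Ioi_eq_integral_exp_smul, givental_two,
    ← integral_sub_left_eq_self _ volume ((u 0 + u 1) / 2), hy, ofReal_exp_cpow]
  rw [show ∀ p q r : ℂ, 2 * p * (q * r) = p * (2 * q) * r from fun p q r => by ring,
    show (2 * (1 / 2) : ℂ) = 1 by norm_num, mul_one,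
    ← integral_const_mul, ← integral_const_mul]
  congr 1
  funext x
  have h1 : Real.exp ((u 0 - u 1) / 2) * Real.exp ((u 0 + u 1) / 2 - x) = Real.exp (u 0 - x) := by
    rw [← Real.exp_add]; ring_nf
  have h2 : Real.exp ((u 0 - u 1) / 2) / Real.exp ((u 0 + u 1) / 2 - x) = Real.exp (x - u 1) := by
    rw [← Real.exp_sub]; ring_nf
  rw [ofReal_exp_cpow, real_smul, mul_div_cancel₀ _ (by simp), ← h1, ← h2, ← Complex.exp_add,
    ← Complex.exp_add, ← Complex.exp_add]
  congr 1
  simp [sumA, Finset.sum_range_succ, -Complex.ofReal_exp]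
  ring

theorem sumA_tildeA (n : ℕ) (a : ℕ → ℂ) :
    sumA (n + 2) (tildeA (n + 3) a) = sumA (n + 3) a := by
  have h : ((n : ℂ) + 2) ≠ 0 := by exact_mod_cast (by omega : n + 2 ≠ 0)
  rw [sumA, sumA, Finset.sum_range_succ' _ (n + 2)]
  simp only [tildeA, Finset.sum_add_distrib, Finset.sum_const, Finset.card_range, nsmul_eq_mul]
  push_cast
  rw [show (n : ℂ) + 3 - 1 = n + 2 by ring]
  field_simp

theorem WhittAr_eq_givental (n : ℕ) (a : ℕ → ℂ) (y : ℕ → ℝ) (u : Fin (n + 2) → ℝ)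
    (hy : ∀ j : Fin (n + 1), y j = Real.exp ((u j.castSucc - u j.succ) / 2)) :
    WhittAr (n + 2) a y =
      cexp (-(sumA (n + 2) a) / 2 * u (Fin.last _)) * givental (n + 2) (fun j => a j / 2) u := by
  induction n generalizing a y with
  | zero => exact WhittAr_two_eq_givental a y u (hy 0)
  | succ n ih =>
    rw [WhittAr, integral_posSet_eq_integral_exp_smul, givental_succ,
      ← integral_sub_left_eq_self _ volume (fun j : Fin (n + 2) => u j.succ - Real.log Real.pi),
      ← integral_const_mul]
    congr 1
    funext x
    set t : Fin (n + 2) → ℝ :=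
      fun j => Real.exp (((fun j : Fin (n + 2) => u j.succ - Real.log Real.pi) - x) j) with ht
    have htj (j) : t j = Real.exp (u j.succ - Real.log Real.pi - x j) := rfl
    have hW := ih (tildeA (n + 3) a)
      (fun j => y (j + 1) * Real.sqrt (extR t (j + 1) / extR t j)) x (fun j => by
        have e1 : extR t ((j : ℕ) + 1) = t j.succ := extR_coe t j.succ
        have e2 : extR t (j : ℕ) = t j.castSucc := extR_coe t j.castSucc
        have e3 := hy j.succ
        rw [Fin.val_succ] at e3
        rw [e1, e2, e3, htj, htj, ← Real.exp_sub, Real.sqrt_eq_rpow, ← Real.exp_mul,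
          ← Real.exp_add, Fin.succ_castSucc]
        ring_nf)
    have hG := givental_add_const (n + 2) (fun j => a (j + 1) / 2) (a 0 / (2 * (n + 2 : ℕ))) x
    have hfun : (fun j => a (j + 1) / 2 + a 0 / (2 * ((n + 2 : ℕ) : ℂ))) =
        fun j => tildeA (n + 3) a j / 2 := by
      funext j
      rw [tildeA]
      push_cast
      rw [show (n : ℂ) + 3 - 1 = n + 2 by ring, add_div, div_div, mul_comm (n + 2 : ℂ)]
    rw [hfun] at hG
    have hK := giventalKernel_half_eq_prod (N := n + 2) (by omega) (a 0) (Real.log Real.pi) u x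
    have hlast : ((Real.pi * extR t (n + 1) : ℝ) : ℂ) ^ (-(sumA (n + 3) a) / 2) =
        cexp (-(sumA (n + 3) a) / 2 * (u (Fin.last _) - x (Fin.last _))) := by
      have e : extR t (n + 1) = t (Fin.last (n + 1)) := extR_coe t (Fin.last (n + 1))
      have e' : Real.pi * t (Fin.last (n + 1)) =
          Real.exp (u (Fin.last _) - x (Fin.last _)) := by
        nth_rw 1 [htj, ← Real.exp_log Real.pi_pos]
        rw [← Real.exp_add, Fin.succ_last]
        ring_nf
      rw [e, e', ofReal_exp_cpow]
      push_cast
      rfl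
    have hfac (j : Fin (n + 2)) :
        cexp (((-(Real.pi * y j) ^ 2 * extR t j - 1 / extR t j : ℝ) : ℂ)) *
          ((Real.pi * y j : ℝ) : ℂ) ^ ((((n + 2 - j : ℕ) : ℂ) * a 0) / ((n + 2 : ℕ) : ℂ)) *
          ((extR t j : ℝ) : ℂ) ^ ((((n + 3 : ℕ) : ℂ) * a 0) / (2 * ((n + 2 : ℕ) : ℂ))) =
        cexp ((-(Real.pi * (Real.exp (u j.castSucc - x j) + Real.exp (x j - u j.succ))) : ℝ) : ℂ) *
          cexp ((((n + 2 : ℕ) : ℂ) - (j : ℕ)) * a 0 / (n + 2 : ℕ) *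
            (Real.log Real.pi + (u j.castSucc - u j.succ) / 2)) *
          cexp ((((n + 2 : ℕ) : ℂ) + 1) * a 0 / (2 * (n + 2 : ℕ)) *
            (u j.succ - Real.log Real.pi - x j)) := by
      have e1 : Real.pi * y j =
          Real.exp (Real.log Real.pi + (u j.castSucc - u j.succ) / 2) := by
        rw [Real.exp_add, Real.exp_log Real.pi_pos, hy]
      have e2 : (Real.pi * y j) ^ 2 * t j = Real.pi * Real.exp (u j.castSucc - x j) := by
        nth_rw 2 [← Real.exp_log Real.pi_pos]
        rw [e1, htj, ← Real.exp_add, ← Real.exp_nat_mul, ← Real.exp_add]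
        push_cast
        ring_nf
      have e3 : 1 / t j = Real.pi * Real.exp (x j - u j.succ) := by
        nth_rw 1 [← Real.exp_log Real.pi_pos]
        rw [htj, one_div, ← Real.exp_neg, ← Real.exp_add]
        ring_nf
      have e4 : -(Real.pi * y j) ^ 2 * t j - 1 / t j =
          -(Real.pi * (Real.exp (u j.castSucc - x j) + Real.exp (x j - u j.succ))) := by
        rw [neg_mul, e2, e3]
        ring
      rw [extR_coe, e4, e1, htj, ofReal_exp_cpow, ofReal_exp_cpow, Nat.cast_sub j.is_lt.le]
      push_cast
      ring_nf
    have hprod : ((∏ j, t j : ℝ) : ℂ) ≠ 0 := by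
      exact_mod_cast (Finset.prod_pos fun j _ => Real.exp_pos _).ne'
    have hconst : cexp (-(sumA (n + 3) a) / 2 * x (Fin.last _)) *
        cexp (-(sumA (n + 3) a) / 2 * (u (Fin.last _) - x (Fin.last _))) =
        cexp (-(sumA (n + 3) a) / 2 * u (Fin.last _)) := by
      rw [← Complex.exp_add]
      ring_nf
    have hshift : cexp (a 0 / (2 * (n + 2 : ℕ)) * ((∑ j, x j : ℝ) : ℂ)) *
        cexp (-(a 0 / (2 * (n + 2 : ℕ))) * ((∑ j, x j : ℝ) : ℂ)) = 1 := by
      rw [← Complex.exp_add, ← Complex.exp_zero]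
      ring_nf
    rw [hW, hG, sumA_tildeA, hlast, Finset.prod_range, Finset.prod_range,
      Finset.prod_congr rfl fun j _ => hfac j, hK, ← hconst, real_smul]
    simp only [extR_coe, ← Complex.ofReal_prod]
    rw [mul_comm, mul_assoc, inv_mul_cancel₀ hprod, mul_one]
    linear_combination (cexp (-(sumA (n + 3) a) / 2 * x (Fin.last _)) *
      cexp (-(sumA (n + 3) a) / 2 * (u (Fin.last _) - x (Fin.last _))) *
      giventalKernel (a 0 / 2) u x * givental (n + 2) (fun j => a (j + 1) / 2) x) * hshift

/-! ### The zeta integral in logarithmic coordinates -/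

@[simp]
theorem snocZero_castSucc {m : ℕ} (x : Fin m → ℝ) (j : Fin m) : snocZero x j.castSucc = x j := by
  simp [snocZero]

@[simp]
theorem snocZero_last {m : ℕ} (x : Fin m → ℝ) : snocZero x (Fin.last m) = 0 := by
  simp [snocZero]

/-- The linear map from Givental's coordinates to logarithmic torus coordinates. -/
def halfDiff (k : ℕ) : (Fin k → ℝ) →ₗ[ℝ] (Fin k → ℝ) where
  toFun u j := (snocZero u j.castSucc - snocZero u j.succ) / 2
  map_add' u v := by
    have h (j) : snocZero (u + v) j = snocZero u j + snocZero v j := by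
      refine Fin.lastCases ?_ (fun i => ?_) j <;> simp
    funext j
    simp only [h, Pi.add_apply]
    ring
  map_smul' c u := by
    have h (j) : snocZero (c • u) j = c * snocZero u j := by
      refine Fin.lastCases ?_ (fun i => ?_) j <;> simp
    funext j
    simp only [h, Pi.smul_apply, smul_eq_mul, RingHom.id_apply]
    ring

theorem halfDiff_apply {k : ℕ} (u : Fin k → ℝ) (j : Fin k) :
    halfDiff k u j = (snocZero u j.castSucc - snocZero u j.succ) / 2 := rfl

theorem det_halfDiff (k : ℕ) : LinearMap.det (halfDiff k) = (1 / 2) ^ k := by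
  have hz {i j : Fin k} (h : j ≤ i) : snocZero (Pi.single j (1 : ℝ)) i.succ = 0 := by
    obtain ⟨l, hl⟩ | hi := i.succ.eq_castSucc_or_eq_last
    · have : l ≠ j := by
        rintro rfl
        have := congrArg Fin.val hl
        simp at this
        omega
      rw [hl, snocZero_castSucc, Pi.single_eq_of_ne this]
    · rw [hi, snocZero_last]
  rw [← LinearMap.det_toMatrix', Matrix.det_of_isUpperTriangular]
  · simp [LinearMap.toMatrix'_apply, halfDiff_apply, hz le_rfl]
  · intro i j hij
    have hij' : j < i := hij
    simp [LinearMap.toMatrix'_apply, halfDiff_apply, hz hij'.le, hij'.ne']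

theorem integral_comp_halfDiff {E : Type*} [NormedAddCommGroup E] [NormedSpace ℝ E] {k : ℕ}
    (f : (Fin k → ℝ) → E) : ∫ u, f (halfDiff k u) = (2 : ℝ) ^ k • ∫ η, f η := by
  have hdet : LinearMap.det (halfDiff k) ≠ 0 := by rw [det_halfDiff]; positivity
  have hemb : MeasurableEmbedding (halfDiff k) :=
    ((halfDiff k).equivOfDetNeZero hdet).toContinuousLinearEquiv.toHomeomorph.measurableEmbedding
  rw [← hemb.integral_map, Real.map_linearMap_volume_pi_eq_smul_volume_pi hdet,
    integral_smul_measure, det_halfDiff]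
  congr 1
  rw [ENNReal.toReal_ofReal (abs_nonneg _)]
  simp

theorem WhittAhat_eq_givental (n : ℕ) (a : ℕ → ℂ) (u : Fin (n + 2) → ℝ) :
    WhittAhat (n + 2) a (extR fun j => Real.exp (halfDiff (n + 2) u j)) =
      givental (n + 2) (fun j => a j / 2) u := by
  have hl : extR (fun j => Real.exp (halfDiff (n + 2) u j)) (n + 2 - 1) =
      Real.exp (u (Fin.last _) / 2) := by
    refine (extR_coe _ (Fin.last (n + 1))).trans ?_
    rw [halfDiff_apply, Fin.succ_last, snocZero_last, snocZero_castSucc, sub_zero]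
  rw [WhittAhat, hl, ofReal_exp_cpow, WhittAr_eq_givental n a _ u fun j => ?_, ← mul_assoc,
    ← Complex.exp_add]
  · rw [Complex.exp_eq_one_iff.2 ⟨0, by push_cast; ring⟩, one_mul]
  · refine (extR_coe _ j.castSucc).trans ?_
    rw [halfDiff_apply, Fin.succ_castSucc, snocZero_castSucc, snocZero_castSucc]

theorem sum_succ_mul_halfDiff {k : ℕ} (u : Fin k → ℝ) :
    ∑ j : Fin k, (((j : ℕ) : ℂ) + 1) * (halfDiff k u j : ℂ) = ((∑ j, u j : ℝ) : ℂ) / 2 := by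
  have h := sum_succ_mul_consecutive_sub k (fun j => (snocZero u j : ℂ))
  simp only [snocZero_castSucc, snocZero_last] at h
  have e (j : Fin k) : (((j : ℕ) : ℂ) + 1) * (halfDiff k u j : ℂ) =
      (((j : ℕ) : ℂ) + 1) * (u j - snocZero u j.succ) / 2 := by
    rw [halfDiff_apply, snocZero_castSucc]
    push_cast
    ring
  simp only [e, ← Finset.sum_div, h]
  simp

theorem zetaGLGL_eq_equalRankPairing (n : ℕ) (a a' : ℕ → ℂ) (s : ℂ) :
    zetaGLGL (n + 2) a a' s =
      equalRankPairing (n + 1) (fun j => a j / 2 + s / 2) (fun j => a' j / 2) := by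
  have h2 : (2 : ℂ) ^ (n + 2) = ((2 ^ (n + 2) : ℝ) : ℂ) := by push_cast; rfl
  rw [zetaGLGL, integral_posSet_eq_integral_exp_smul, h2, ← real_smul, ← integral_comp_halfDiff,
    equalRankPairing]
  congr 1
  funext u
  have hl : extR (fun j => Real.exp (halfDiff (n + 2) u j)) (n + 2 - 1) ^ 2 =
      Real.exp (u (Fin.last _)) := by
    have e := extR_coe (fun j => Real.exp (halfDiff (n + 2) u j)) (Fin.last (n + 1))
    rw [halfDiff_apply, Fin.succ_last, snocZero_last, snocZero_castSucc, sub_zero] at e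
    rw [show n + 2 - 1 = (Fin.last (n + 1) : ℕ) from rfl, e, ← Real.exp_nat_mul]
    push_cast
    ring_nf
  have hprod : (((∏ j, Real.exp (halfDiff (n + 2) u j) : ℝ)) : ℂ) ≠ 0 := by
    exact_mod_cast (Finset.prod_pos fun j _ => Real.exp_pos _).ne'
  rw [WhittAhat_eq_givental, WhittAhat_eq_givental, hl, givental_add_const, lastWeight,
    Finset.prod_range, Finset.prod_div_distrib, real_smul]
  simp only [extR_coe, ofReal_exp_cpow, ← Complex.exp_sum, ← Complex.ofReal_prod]
  have e : ∑ j : Fin (n + 2), (((j : ℕ) + 1 : ℕ) : ℂ) * s * (halfDiff (n + 2) u j : ℂ) =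
      s / 2 * ((∑ j, u j : ℝ) : ℂ) := by
    rw [div_mul_eq_mul_div, mul_div_assoc, ← sum_succ_mul_halfDiff, Finset.mul_sum]
    refine Finset.sum_congr rfl fun j _ => ?_
    push_cast
    ring
  rw [e]
  field_simp
  push_cast
  ring_nf

/-- The archimedean `GL_n × GL_n` zeta integral equals its local `L`-factor
(Theorem 2.1(2) of Ishii–Stade). -/
theorem gl_gl_zeta_eq_Lfactor (n : ℕ) (hn : 2 ≤ n)
    (a a' : ℕ → ℂ) (ha : ∀ j < n, (a j).re = 0) (ha' : ∀ k < n, (a' k).re = 0)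
    (s : ℂ) (hs : 0 < s.re) :
    zetaGLGL n a a' s =
      ∏ j ∈ Finset.range n, ∏ k ∈ Finset.range n, GammaR (s + a j + a' k) := by
  obtain ⟨m, rfl⟩ := Nat.exists_eq_add_of_le' hn
  have hre (j k : ℕ) (hj : j < m + 2) (hk : k < m + 2) : 0 < (s + a j + a' k).re := by
    simpa [ha j hj, ha' k hk] using hs
  have hsum (j k : ℕ) : a j / 2 + s / 2 + a' k / 2 = (s + a j + a' k) / 2 := by ring
  rw [zetaGLGL_eq_equalRankPairing, equalRankPairing_eq_prod]
  · refine Finset.prod_congr rfl fun j hj => Finset.prod_congr rfl fun k hk => ?_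
    rw [hsum, gammaInt_eq_GammaR (hre j k (Finset.mem_range.1 hj) (Finset.mem_range.1 hk))]
  · intro j hj k hk
    rw [hsum, Complex.div_ofNat_re]
    have := hre j k (by omega) (by omega)
    positivity

end
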